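/- Let $\Omega\subset\mathbb R^2$ be a bounded open connected polygonal domain with Lipschitz boundary $\Gamma$, let $\mathcal T_h$ be a conforming triangulation of $\Omega$ with set of edges $\mathcal E_h$ and set of boundary edges $\mathcal E_h^\partial$ (those contained in $\Gamma$), let $n$ denote the outward unit normal on the boundary of each triangle $T$, let $\tau$ be the unit tangent on $\Gamma$, and put $\eta|_{\partial T}=h_T^{-1}$ with $h_T=\operatorname{diam}T$. Let $k\ge 1$, $\gamma>0$, $f,y_d\in L^2(\Omega)^2$ and $u\in L^2(\Gamma)$ (for instance the optimal control of the tangential Dirichlet boundary control problem for the Stokes system with $\nu=1$). Write $(\cdot,\cdot)_{\mathcal T_h}=\sum_{T}\int_T$, $\langle\cdot,\cdot\rangle_{\partial\mathcal T_h}=\sum_T\int_{\partial T}$, $\langle\cdot,\cdot\rangle_\Gamma=\langle\cdot,\cdot\rangle_{\mathcal E_h^\partial}=\sum_{E\in\mathcal E_h^\partial}\int_E$ for the broken $L^2$ inner products, $\|\cdot\|_{\mathcal T_h}$ and $\|\cdot\|_{\mathcal E_h^\partial}$ for the corresponding norms, and let $\Pi_m^\partial$ be the edgewise (componentwise) $L^2$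 projection onto polynomials of degree at most $m$. Traces from the adjacent triangle are used on boundary edges. Consider the spaces $$\Sigma_h=\{G: G|_T\in P_{k-1}(T)^{2\times2}\ \forall T\},\qquad V_h^0=\{v\in H(\mathrm{div};\Omega): v|_T\in P_k(T)^2\ \forall T,\ v\cdot n|_\Gamma=0\},$$ $$\widehat V_h^0=\{\hat v\in L^2(\mathcal E_h)^2:\hat v|_E\in P_{k-1}(E)^2\ \forall E\in\mathcal E_h,\ \hat v|_\Gamma=0\},\qquad U_h=\{\mu\in L^2(\Gamma):\mu|_E\in P_{k-1}(E)\ \forall E\in\mathcal E_h^\partial\},$$ $$Q_h=\{q\in L^2_0(\Omega): q|_T\in P_{k-1}(T)\ \forall T\},$$ and the bilinear form (with elementwise differential operators) $$\mathscr B(L,y,\hat y,p;G,v,\hat v,q)=(L,G)_{\mathcal T_h}+(y,\nabla\cdot G)_{\mathcal T_h}-\langle\hat y,Gn\rangle_{\partial\mathcal T_h}-(\nabla\cdot L,v)_{\mathcal T_h}+\langle Ln,\hat v\rangle_{\partial\mathcal T_h}-(p,\nabla\cdot v)_{\mathcal T_h}+\langle\eta(\Pi_{k-1}^\partial y-\hat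 y),\Pi_{k-1}^\partial v-\hat v\rangle_{\partial\mathcal T_h}+(\nabla\cdot y,q)_{\mathcal T_h}.$$ Let $X_h=\Sigma_h\times V_h^0\times\widehat V_h^0\times Q_h$. Let $(L_h,y_h,\hat y_h^o,p_h)\in X_h$, $(T_h,z_h,\hat z_h,w_h)\in X_h$ and $u_h\in U_h$ solve the discrete optimality system $$\mathscr B(L_h,y_h,\hat y_h^o,p_h;G,v,\hat v,q)=(f,v)_{\mathcal T_h}+\langle u_h\tau,Gn\rangle_\Gamma+\langle\eta u_h\tau,v\rangle_\Gamma,\qquad \mathscr B(T_h,z_h,\hat z_h,w_h;G,v,\hat v,q)=(y_h-y_d,v)_{\mathcal T_h},$$ $$\langle\gamma u_h\tau-T_hn+\eta\Pi_k^\partial z_h,\mu\tau\rangle_\Gamma=0$$ for all $(G,v,\hat v,q)\in X_h$ and $\mu\in U_h$, and let $(L_h(u),y_h(u),\hat y_h^o(u),p_h(u))\in X_h$ and $(T_h(u),z_h(u),\hat z_h(u),w_h(u))\in X_h$ solve the auxiliary problems $$\mathscr B(L_h(u),y_h(u),\hat y_h^o(u),p_h(u);G,v,\hat v,q)=(f,v)_{\mathcal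 T_h}+\langle\Pi_{k-1}^\partial u\,\tau,Gn\rangle_\Gamma+\langle\eta\,\Pi_{k-1}^\partial u\,\tau,v\rangle_\Gamma,$$ $$\mathscr B(T_h(u),z_h(u),\hat z_h(u),w_h(u);G,v,\hat v,q)=(y_h(u)-y_d,v)_{\mathcal T_h}$$ for all $(G,v,\hat v,q)\in X_h$. Then, with $\zeta_y=y_h(u)-y_h$, $$\gamma\|u-u_h\|_{\mathcal E_h^\partial}^2+\|\zeta_y\|_{\mathcal T_h}^2=\langle\gamma u\tau-T_h(u)n+\eta\Pi_{k-1}^\partial z_h(u),(u-u_h)\tau\rangle_{\mathcal E_h^\partial}-\langle\gamma u_h\tau-T_hn+\eta\Pi_{k-1}^\partial z_h,(u-u_h)\tau\rangle_{\mathcal E_h^\partial}.$$ -/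

import Mathlib

open MeasureTheory
open scoped Measure

noncomputable section

namespace HDGControl

/-- The Euclidean plane. -/
abbrev Pt : Type := EuclideanSpace ℝ (Fin 2)

/-! ### The domain and its triangulations -/

/-- `Ω` has a Lipschitz boundary: near each boundary point, in suitable orthonormal coordinates,
`Ω` is the part of the plane strictly above the graph of a Lipschitz function. -/
def HasLipschitzBoundary (Ω : Set Pt) : Prop :=
  ∀ x ∈ frontier Ω, ∃ (c : Pt ≃ᵃⁱ[ℝ] Pt) (g : ℝ → ℝ) (C : NNReal) (r : ℝ),
    LipschitzWith C g ∧ 0 < r ∧ ∀ p ∈ Metric.ball x r, (p ∈ Ω ↔ g (c p 0) < c p 1)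

/-- An open bounded connected plane set with Lipschitz boundary consisting of finitely many
line segments. -/
structure IsPolygonalDomain (Ω : Set Pt) : Prop where
  isOpen : IsOpen Ω
  isConnected : IsConnected Ω
  isBounded : Bornology.IsBounded Ω
  lipschitz : HasLipschitzBoundary Ω
  polygonal : ∃ S : Finset (Pt × Pt), frontier Ω = ⋃ s ∈ S, segment ℝ s.1 s.2

/-- A (conforming) simplicial triangulation `T_h` of `Ω`: a finite simplicial complex in the plane,
all of whose faces are faces of triangles, and whose underlying space is `closure Ω`.
Simplices are recorded by their finite sets of vertices. -/
structure Triangulation (Ω : Set Pt) where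
  K : Geometry.SimplicialComplex ℝ Pt
  finite : K.faces.Finite
  pure : ∀ s ∈ K.faces, ∃ t ∈ K.faces, s ⊆ t ∧ t.card = 3
  space_eq : K.space = closure Ω

/-- The closed simplex with vertex set `s`. -/
abbrev hull (s : Finset Pt) : Set Pt := convexHull ℝ (s : Set Pt)

/-- Arc length measure on the edge with vertex set `e`. -/
abbrev edgeMeasure (e : Finset Pt) : Measure Pt := (μH[1] : Measure Pt).restrict (hull e)

/-- `n` is the outward unit normal of the triangle `T` on its edge `e`. -/
def IsOutwardNormal (T e : Finset Pt) (n : Pt) : Prop :=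
  ‖n‖ = 1 ∧ (∀ a ∈ e, ∀ b ∈ e, inner ℝ (b - a) n = 0) ∧
    ∀ a ∈ e, ∀ c ∈ T, c ∉ e → inner ℝ (c - a) n < 0

theorem exists_isOutwardNormal (T e : Finset Pt)
    (hT : AffineIndependent ℝ ((↑) : T → Pt)) (hT3 : T.card = 3) (heT : e ⊆ T)
    (he2 : e.card = 2) : ∃ n, IsOutwardNormal T e n := by
  classical
  obtain ⟨a, b, hab, rfl⟩ := Finset.card_eq_two.1 he2
  obtain ⟨c, hc⟩ : ∃ c, T \ {a, b} = {c} := by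
    rw [← Finset.card_eq_one, Finset.card_sdiff_of_subset heT, hT3, he2]
  have hTc : ∀ x ∈ T, x ∉ ({a, b} : Finset Pt) → x = c := fun x hx hx' => by
    have : x ∈ T \ {a, b} := Finset.mem_sdiff.2 ⟨hx, hx'⟩
    simpa [hc] using this
  have hcT : c ∈ T := (Finset.mem_sdiff.1 (hc ▸ Finset.mem_singleton_self c)).1
  have hcab : c ≠ a ∧ c ≠ b := by
    have := (Finset.mem_sdiff.1 (hc ▸ Finset.mem_singleton_self c)).2
    simpa using this
  have hTeq : (T : Set Pt) = {a, b, c} := by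
    have : T = {a, b, c} := by
      rw [← Finset.sdiff_union_of_subset heT, hc]; ext x; simp; tauto
    rw [this]; simp
  have hncol : ¬ Collinear ℝ ({a, b, c} : Set Pt) := by
    rw [← affineIndependent_iff_not_collinear_set]
    have hmem : ∀ i, (![a, b, c] : Fin 3 → Pt) i ∈ T := by
      intro i; fin_cases i
      · exact heT (by simp)
      · exact heT (by simp)
      · exact hcT
    have := hT.comp_embedding (f := ⟨fun i : Fin 3 => (⟨![a, b, c] i, hmem i⟩ : T), by
      intro i j h
      have h' : ![a, b, c] i = ![a, b, c] j := congrArg Subtype.val h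
      fin_cases i <;> fin_cases j <;> simp_all [eq_comm]⟩)
    exact this
  set m : Pt := !₂[-((b - a) 1), (b - a) 0] with hm
  have hbm : inner ℝ (b - a) m = 0 := by
    simp [hm, EuclideanSpace.inner_eq_star_dotProduct, dotProduct, Fin.sum_univ_two]; ring
  have hba : b - a ≠ 0 := sub_ne_zero.2 hab.symm
  have hs : inner ℝ (c - a) m ≠ 0 := by
    intro h0
    apply hncol
    have h1 : (c 1 - a 1) * (b 0 - a 0) = (c 0 - a 0) * (b 1 - a 1) := by
      simp [hm, EuclideanSpace.inner_eq_star_dotProduct, dotProduct, Fin.sum_univ_two] at h0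
      linarith
    rw [collinear_iff_of_mem (p₀ := a) (by simp)]
    refine ⟨b - a, ?_⟩
    have hN : (b 0 - a 0) ^ 2 + (b 1 - a 1) ^ 2 ≠ 0 := by
      intro h
      apply hba
      have e0 : b 0 - a 0 = 0 := by nlinarith [sq_nonneg (b 0 - a 0), sq_nonneg (b 1 - a 1)]
      have e1 : b 1 - a 1 = 0 := by nlinarith [sq_nonneg (b 0 - a 0), sq_nonneg (b 1 - a 1)]
      ext i; fin_cases i <;> simpa
    intro x hx
    rcases hx with rfl | rfl | rfl
    · exact ⟨0, by simp⟩
    · exact ⟨1, by simp⟩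
    · refine ⟨((x 0 - a 0) * (b 0 - a 0) + (x 1 - a 1) * (b 1 - a 1)) /
        ((b 0 - a 0) ^ 2 + (b 1 - a 1) ^ 2), ?_⟩
      ext i
      fin_cases i
      · simp; field_simp; linear_combination (-(b 1 - a 1)) * h1
      · simp; field_simp; linear_combination ((b 0 - a 0)) * h1
  have hm0 : m ≠ 0 := by rintro h; simp [h] at hs
  have hnm : 0 < ‖m‖ := norm_pos_iff.2 hm0
  -- the right sign
  obtain ⟨σ, hσ, hσs⟩ : ∃ σ : ℝ, |σ| = 1 ∧ σ * inner ℝ (c - a) m < 0 := by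
    rcases lt_or_gt_of_ne hs with h | h
    · exact ⟨1, by simp, by simpa⟩
    · exact ⟨-1, by simp, by simpa⟩
  refine ⟨(σ * ‖m‖⁻¹) • m, ?_, ?_, ?_⟩
  · rw [norm_smul, norm_mul, Real.norm_eq_abs, hσ]; simp [hnm.ne']
  · intro x hx y hy
    rw [inner_smul_right]
    have : inner ℝ (y - x) m = 0 := by
      simp only [Finset.mem_insert, Finset.mem_singleton] at hx hy
      rcases hx with rfl | rfl <;> rcases hy with rfl | rfl
      · simp
      · exact hbm
      · rw [← neg_sub, inner_neg_left, hbm, neg_zero]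
      · simp
    rw [this, mul_zero]
  · intro x hx y hy hxy
    obtain rfl := hTc y hy hxy
    have h2 : inner ℝ (y - x) m = inner ℝ (y - a) m := by
      simp only [Finset.mem_insert, Finset.mem_singleton] at hx
      rcases hx with rfl | rfl
      · rfl
      · rw [← sub_add_sub_cancel y x a, inner_add_left, hbm, add_zero]
    rw [inner_smul_right, h2]
    have : σ * ‖m‖⁻¹ * inner ℝ (y - a) m = ‖m‖⁻¹ * (σ * inner ℝ (y - a) m) := by ring
    rw [this]
    exact mul_neg_of_pos_of_neg (inv_pos.2 hnm) hσs

/-- The outward unit normal `n` of the triangle `T` on its edge `e`. -/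
def normal (T e : Finset Pt) : Pt := Classical.epsilon (IsOutwardNormal T e)

/-- The weight `η|_{∂T} = h_T⁻¹`, where `h_T` is the diameter of `T`. -/
def eta (T : Finset Pt) : ℝ := (Metric.diam (hull T))⁻¹

namespace Triangulation

variable {Ω : Set Pt} (M : Triangulation Ω)

/-- The triangles of the triangulation. -/
def triangles : Finset (Finset Pt) := M.finite.toFinset.filter (fun s => s.card = 3)

/-- The set `E_h` of all edges. -/
def edges : Finset (Finset Pt) := M.finite.toFinset.filter (fun s => s.card = 2)

open Classical in
/-- The set `E_h^∂` of boundary edges, that is, of edges contained in `Γ = ∂Ω`. -/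
def bdryEdges : Finset (Finset Pt) := M.edges.filter (fun e => hull e ⊆ frontier Ω)

/-- The triangle `T` of which a given boundary edge `e` is an edge (there is exactly one). -/
def bdryTriangle (e : Finset Pt) : Finset Pt :=
  Classical.epsilon (fun T => T ∈ M.triangles ∧ e ⊆ T)

/-- The outward unit normal of `Ω` on the boundary edge `e`. -/
def bdryNormal (e : Finset Pt) : Pt := normal (M.bdryTriangle e) e

/-- The unit tangent `τ` of `Γ` on the boundary edge `e`: the outward unit normal rotated
counterclockwise by a right angle. -/
def tau (e : Finset Pt) : Pt := !₂[-(M.bdryNormal e 1), M.bdryNormal e 0]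

/-- The weight `η` on the boundary edge `e`. -/
def bdryEta (e : Finset Pt) : ℝ := eta (M.bdryTriangle e)

end Triangulation

/-! ### Polynomials, edge projections -/

/-- Polynomials in two variables. -/
abbrev Poly : Type := MvPolynomial (Fin 2) ℝ

/-- The value of a polynomial at a point. -/
def evalAt (p : Poly) (x : Pt) : ℝ := MvPolynomial.eval (fun i => x i) p

/-- The value at a point of a vector field with polynomial components. -/
def vecAt (v : Fin 2 → Poly) (x : Pt) : Pt := WithLp.toLp 2 fun i => evalAt (v i) x

/-- The value of `G n` at a point, for a tensor field `G` with polynomial components. -/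
def mulNormalAt (G : Fin 2 → Fin 2 → Poly) (n : Pt) (x : Pt) : Pt :=
  WithLp.toLp 2 fun i => ∑ j, evalAt (G i j) x * n j

/-- On the edge `e`, the polynomial `p` is the `L²` projection of `g` onto `P_m(e)`. -/
def IsEdgeProj (m : ℕ) (e : Finset Pt) (g : Pt → ℝ) (p : Poly) : Prop :=
  p.totalDegree ≤ m ∧ ∀ w : Poly, w.totalDegree ≤ m →
    ∫ x, evalAt p x * evalAt w x ∂edgeMeasure e = ∫ x, g x * evalAt w x ∂edgeMeasure e

theorem continuous_evalAt (p : Poly) : Continuous (evalAt p) := by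
  unfold evalAt
  exact (MvPolynomial.continuous_eval p).comp (by fun_prop)

theorem edgeMeasure_hull_lt_top (e : Finset Pt) (he : e.card = 2) :
    edgeMeasure e Set.univ < ⊤ := by
  classical
  obtain ⟨a, b, -, rfl⟩ := Finset.card_eq_two.1 he
  simp [edgeMeasure, hull, convexHull_pair, hausdorffMeasure_segment, edist_lt_top]

theorem memLp_evalAt (e : Finset Pt) (he : e.card = 2) (p : Poly) :
    MemLp (evalAt p) 2 (edgeMeasure e) := by
  have : IsFiniteMeasure (edgeMeasure e) := ⟨edgeMeasure_hull_lt_top e he⟩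
  have hcomp : IsCompact (hull e) := e.finite_toSet.isCompact_convexHull (𝕜 := ℝ)
  obtain ⟨C, hC⟩ := hcomp.exists_bound_of_continuousOn (continuous_evalAt p).continuousOn
  refine MemLp.of_bound (continuous_evalAt p).aestronglyMeasurable C ?_
  exact (ae_restrict_iff' hcomp.measurableSet).2 (Filter.Eventually.of_forall hC)

theorem exists_isEdgeProj (m : ℕ) (e : Finset Pt) (he : e.card = 2) (g : Pt → ℝ)
    (hg : MemLp g 2 (edgeMeasure e)) : ∃ p, IsEdgeProj m e g p := by
  let A : MvPolynomial.restrictTotalDegree (Fin 2) ℝ m →ₗ[ℝ] Lp ℝ 2 (edgeMeasure e) :=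
    { toFun := fun p => (memLp_evalAt e he p.1).toLp _
      map_add' := fun p q => by
        rw [← MemLp.toLp_add]; congr 1; ext x; simp [evalAt]
      map_smul' := fun c p => by
        rw [RingHom.id_apply, ← MemLp.toLp_const_smul]; congr 1; ext x; simp [evalAt] }
  have : Module.Finite ℝ (LinearMap.range A) := Module.Finite.range A
  have hint : ∀ (a b : Pt → ℝ) (ha : MemLp a 2 (edgeMeasure e)) (hb : MemLp b 2 (edgeMeasure e)),
      inner ℝ (ha.toLp a) (hb.toLp b) = ∫ x, a x * b x ∂edgeMeasure e := by
    intro a b ha hb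
    rw [L2.inner_def]
    refine integral_congr_ae ?_
    filter_upwards [ha.coeFn_toLp, hb.coeFn_toLp] with x h1 h2
    rw [h1, h2]; simp [mul_comm]
  obtain ⟨p, hp⟩ := ((LinearMap.range A).orthogonalProjectionOnto (hg.toLp g)).2
  refine ⟨p.1, (MvPolynomial.mem_restrictTotalDegree _ _ _).1 p.2, fun w hw => ?_⟩
  have := Submodule.starProjection_inner_eq_zero (K := LinearMap.range A) (hg.toLp g)
    (A ⟨w, (MvPolynomial.mem_restrictTotalDegree _ _ _).2 hw⟩) ⟨_, rfl⟩
  rw [Submodule.starProjection_apply, ← hp, inner_sub_left, sub_eq_zero] at this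
  have h1 := hint g (evalAt w) hg (memLp_evalAt e he w)
  have h2 := hint (evalAt p.1) (evalAt w) (memLp_evalAt e he p.1) (memLp_evalAt e he w)
  rw [← h1, ← h2]
  exact this.symm

/-- The edgewise `L²` projection `Π_m^∂ g` on the edge `e`, as a function on `e`. -/
def edgeProj (m : ℕ) (e : Finset Pt) (g : Pt → ℝ) (x : Pt) : ℝ :=
  evalAt (Classical.epsilon (IsEdgeProj m e g)) x

/-- The edgewise `L²` projection of a vector field, taken componentwise. -/
def edgeProjVec (m : ℕ) (e : Finset Pt) (g : Pt → Pt) (x : Pt) : Pt :=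
  WithLp.toLp 2 fun i => edgeProj m e (fun y => g y i) x

/-! ### Broken polynomial fields

A field that is polynomial on every triangle is given by its polynomial on every triangle `T`
(the values at vertex sets that are not triangles of the mesh play no role); the polynomial of `T`
also gives the trace on `∂T`. Fields on the skeleton are functions of the point, considered up to
equality almost everywhere on edges. -/

abbrev BrokenScal : Type := Finset Pt → Poly
abbrev BrokenVec : Type := Finset Pt → Fin 2 → Poly
abbrev BrokenTen : Type := Finset Pt → Fin 2 → Fin 2 → Poly

/-- The elementwise divergence of a vector field. -/
def divVec (v : BrokenVec) : BrokenScal := fun T => ∑ j, MvPolynomial.pderiv j (v T j)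

/-- The elementwise (rowwise) divergence of a tensor field. -/
def divTen (G : BrokenTen) : BrokenVec := fun T i => ∑ j, MvPolynomial.pderiv j (G T i j)

namespace Triangulation

variable {Ω : Set Pt} (M : Triangulation Ω)

/-- `(p, q)_{T_h}` for scalar fields. -/
def ipScal (p q : BrokenScal) : ℝ :=
  ∑ T ∈ M.triangles, ∫ x in hull T, evalAt (p T) x * evalAt (q T) x

/-- `(v, w)_{T_h}` for vector fields. -/
def ipVec (v w : BrokenVec) : ℝ :=
  ∑ T ∈ M.triangles, ∫ x in hull T, inner ℝ (vecAt (v T) x) (vecAt (w T) x)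

/-- `(G, H)_{T_h}` for tensor fields. -/
def ipTen (G H : BrokenTen) : ℝ :=
  ∑ T ∈ M.triangles, ∫ x in hull T, ∑ i, ∑ j, evalAt (G T i j) x * evalAt (H T i j) x

/-- `(f, v)_{T_h}` for a field `f` on `Ω`. -/
def load (f : Pt → Pt) (v : BrokenVec) : ℝ :=
  ∑ T ∈ M.triangles, ∫ x in hull T, inner ℝ (f x) (vecAt (v T) x)

/-- `(y - y_d, v)_{T_h}` for a broken polynomial field `y` and a field `y_d` on `Ω`. -/
def loadDiff (y : BrokenVec) (yd : Pt → Pt) (v : BrokenVec) : ℝ :=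
  ∑ T ∈ M.triangles, ∫ x in hull T, inner ℝ (vecAt (y T) x - yd x) (vecAt (v T) x)

/-- `⟨a, b⟩_{∂T_h} = ∑_T ∑_{e ⊂ ∂T} ∫_e a · b` for fields that may take different values on the two
sides of an edge. -/
def ipSkel (a b : Finset Pt → Finset Pt → Pt → Pt) : ℝ :=
  ∑ T ∈ M.triangles, ∑ e ∈ T.powersetCard 2,
    ∫ x, inner ℝ (a T e x) (b T e x) ∂edgeMeasure e

/-- `⟨a, b⟩_Γ = ⟨a, b⟩_{E_h^∂} = ∑_{e ∈ E_h^∂} ∫_e a · b`. -/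
def ipBdry (a b : Finset Pt → Pt → Pt) : ℝ :=
  ∑ e ∈ M.bdryEdges, ∫ x, inner ℝ (a e x) (b e x) ∂edgeMeasure e

/-- The norm `‖v‖_{T_h}` of a vector field. -/
def normVec (v : BrokenVec) : ℝ :=
  Real.sqrt (∑ T ∈ M.triangles, ∫ x in hull T, ‖vecAt (v T) x‖ ^ 2)

/-- The norm `‖c‖_{E_h^∂}` of a scalar function on `Γ`. -/
def normBdry (c : Pt → ℝ) : ℝ :=
  Real.sqrt (∑ e ∈ M.bdryEdges, ∫ x, ‖c x‖ ^ 2 ∂edgeMeasure e)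

/-- `G n` on `∂T_h`. -/
def skelNormal (G : BrokenTen) : Finset Pt → Finset Pt → Pt → Pt :=
  fun T e x => mulNormalAt (G T) (normal T e) x

/-- `Π_{m}^∂ v - v̂` on `∂T_h`. -/
def skelJump (m : ℕ) (v : BrokenVec) (vhat : Pt → Pt) : Finset Pt → Finset Pt → Pt → Pt :=
  fun T e x => edgeProjVec m e (vecAt (v T)) x - vhat x

/-- `c τ` on `Γ`, for a scalar function `c`. -/
def tang (c : Pt → ℝ) : Finset Pt → Pt → Pt := fun e x => c x • M.tau e

/-- `G n` on `Γ`. -/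
def bdryFlux (G : BrokenTen) : Finset Pt → Pt → Pt :=
  fun e x => mulNormalAt (G (M.bdryTriangle e)) (M.bdryNormal e) x

/-- The trace of `v` on `Γ`. -/
def bdryTrace (v : BrokenVec) : Finset Pt → Pt → Pt :=
  fun e x => vecAt (v (M.bdryTriangle e)) x

/-- `η a` on `Γ`. -/
def etaMul (a : Finset Pt → Pt → Pt) : Finset Pt → Pt → Pt := fun e x => M.bdryEta e • a e x

/-- `Π_m^∂ a` on `Γ`. -/
def bdryProj (m : ℕ) (a : Finset Pt → Pt → Pt) : Finset Pt → Pt → Pt :=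
  fun e x => edgeProjVec m e (a e) x

/-- `(Π_m^∂ c) τ` on `Γ`, for a scalar function `c`. -/
def tangProj (m : ℕ) (c : Pt → ℝ) : Finset Pt → Pt → Pt :=
  fun e x => edgeProj m e c x • M.tau e

/-! ### The finite element spaces -/

/-- `Σ_h`: tensor fields with components in `P_{k-1}(T)` on every triangle. -/
def Sig (k : ℕ) : Set BrokenTen :=
  {G | ∀ T ∈ M.triangles, ∀ i j, (G T i j).totalDegree ≤ k - 1}

/-- The broken polynomial field `v` lies in `H(div; Ω)`: its distributional divergence on `Ω` is a
square integrable function. -/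
def IsHDiv (v : BrokenVec) : Prop :=
  ∃ g : Pt → ℝ, MemLp g 2 (volume.restrict Ω) ∧
    ∀ φ : Pt → ℝ, ContDiff ℝ (⊤ : ℕ∞) φ → HasCompactSupport φ → tsupport φ ⊆ Ω →
      ∑ T ∈ M.triangles, ∫ x in hull T, fderiv ℝ φ x (vecAt (v T) x)
        = -∫ x in Ω, g x * φ x

/-- `V_h^0`: fields in `H(div; Ω)` with components in `P_k(T)` on every triangle and with
vanishing normal component on `Γ`. -/
def Vel (k : ℕ) : Set BrokenVec :=
  {v | (∀ T ∈ M.triangles, ∀ i, (v T i).totalDegree ≤ k) ∧ M.IsHDiv v ∧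
    ∀ e ∈ M.bdryEdges, ∀ x ∈ hull e, inner ℝ (M.bdryTrace v e x) (M.bdryNormal e) = 0}

/-- `V̂_h^0`: vector fields on the skeleton with components in `P_{k-1}(e)` on every edge `e`,
vanishing on `Γ`. -/
def Hyb (k : ℕ) : Set (Pt → Pt) :=
  {vhat | (∀ e ∈ M.edges, ∃ p : Fin 2 → Poly, (∀ i, (p i).totalDegree ≤ k - 1) ∧
      vhat =ᵐ[edgeMeasure e] vecAt p) ∧
    ∀ e ∈ M.bdryEdges, vhat =ᵐ[edgeMeasure e] 0}

/-- `U_h`: functions on `Γ` that belong to `P_{k-1}(e)` on every boundary edge `e`. -/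
def Ctrl (k : ℕ) : Set (Pt → ℝ) :=
  {c | ∀ e ∈ M.bdryEdges, ∃ p : Poly, p.totalDegree ≤ k - 1 ∧ c =ᵐ[edgeMeasure e] evalAt p}

/-- `Q_h`: scalar fields belonging to `P_{k-1}(T)` on every triangle, with mean value zero. -/
def Pres (k : ℕ) : Set BrokenScal :=
  {q | (∀ T ∈ M.triangles, (q T).totalDegree ≤ k - 1) ∧
    ∑ T ∈ M.triangles, ∫ x in hull T, evalAt (q T) x = 0}

/-! ### The discrete problems -/

/-- The bilinear form `ℬ(L, y, ŷ, p; G, v, v̂, q)` with `ν = 1`. -/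
def B (k : ℕ) (L : BrokenTen) (y : BrokenVec) (yhat : Pt → Pt) (p : BrokenScal)
    (G : BrokenTen) (v : BrokenVec) (vhat : Pt → Pt) (q : BrokenScal) : ℝ :=
  M.ipTen L G + M.ipVec y (divTen G) - M.ipSkel (fun _ _ x => yhat x) (skelNormal G)
    - M.ipVec (divTen L) v + M.ipSkel (skelNormal L) (fun _ _ x => vhat x)
    - M.ipScal p (divVec v)
    + M.ipSkel (fun T e x => eta T • skelJump (k - 1) y yhat T e x) (skelJump (k - 1) v vhat)
    + M.ipScal (divVec y) q

/-- `(L, y, ŷ, p) ∈ Σ_h × V_h^0 × V̂_h^0 × Q_h` solves the discrete state equation with force `f`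
and boundary datum `g`:
`ℬ(L, y, ŷ, p; G, v, v̂, q) = (f, v)_{T_h} + ⟨g, G n⟩_Γ + ⟨η g, v⟩_Γ` for all test functions. -/
structure IsState (k : ℕ) (f : Pt → Pt) (g : Finset Pt → Pt → Pt)
    (L : BrokenTen) (y : BrokenVec) (yhat : Pt → Pt) (p : BrokenScal) : Prop where
  memL : L ∈ M.Sig k
  memY : y ∈ M.Vel k
  memYhat : yhat ∈ M.Hyb k
  memP : p ∈ M.Pres k
  eqn : ∀ G ∈ M.Sig k, ∀ v ∈ M.Vel k, ∀ vhat ∈ M.Hyb k, ∀ q ∈ M.Pres k,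
    M.B k L y yhat p G v vhat q
      = M.load f v + M.ipBdry g (M.bdryFlux G) + M.ipBdry (M.etaMul g) (M.bdryTrace v)

/-- `(T, z, ẑ, w) ∈ Σ_h × V_h^0 × V̂_h^0 × Q_h` solves the discrete adjoint equation
`ℬ(T, z, ẑ, w; G, v, v̂, q) = (y - y_d, v)_{T_h}` for all test functions. -/
structure IsAdjoint (k : ℕ) (y : BrokenVec) (yd : Pt → Pt)
    (T : BrokenTen) (z : BrokenVec) (zhat : Pt → Pt) (w : BrokenScal) : Prop where
  memT : T ∈ M.Sig k
  memZ : z ∈ M.Vel k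
  memZhat : zhat ∈ M.Hyb k
  memW : w ∈ M.Pres k
  eqn : ∀ G ∈ M.Sig k, ∀ v ∈ M.Vel k, ∀ vhat ∈ M.Hyb k, ∀ q ∈ M.Pres k,
    M.B k T z zhat w G v vhat q = M.loadDiff y yd v

/-- The boundary field `γ c τ - T n + η Π_m^∂ z` on `Γ`. -/
def residual (m : ℕ) (γ : ℝ) (c : Pt → ℝ) (T : BrokenTen) (z : BrokenVec) :
    Finset Pt → Pt → Pt :=
  γ • M.tang c - M.bdryFlux T + M.etaMul (bdryProj m (M.bdryTrace z))

/-- The discrete optimality system: state equation with control `u_h`, adjoint equation with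
right-hand side `y_h - y_d`, and
`⟨γ u_h τ - T_h n + η Π_k^∂ z_h, μ τ⟩_Γ = 0` for all `μ ∈ U_h`. -/
structure IsDiscreteOptimal (k : ℕ) (γ : ℝ) (f yd : Pt → Pt)
    (Lh : BrokenTen) (yh : BrokenVec) (yhath : Pt → Pt) (ph : BrokenScal)
    (Th : BrokenTen) (zh : BrokenVec) (zhath : Pt → Pt) (wh : BrokenScal)
    (uh : Pt → ℝ) : Prop where
  memU : uh ∈ M.Ctrl k
  state : M.IsState k f (M.tang uh) Lh yh yhath ph
  adjoint : M.IsAdjoint k yh yd Th zh zhath wh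
  optimality : ∀ μ ∈ M.Ctrl k, M.ipBdry (M.residual k γ uh Th zh) (M.tang μ) = 0

end Triangulation

end HDGControl

end

/-!
The identity is the strong convexity of the discrete reduced cost functional. The form `ℬ` is
symmetric up to the signs of the flux and the pressure, so testing the state equation for a control
`c` with an adjoint solution, and conversely, expresses `(y' - y_d, y)_{T_h}` through
`(f, z)_{T_h}` and the pairing of `-T n + η Π_{k-1}^∂ z` with `c τ`; self-adjointness of the edge
projection moves `Π_{k-1}^∂` from the control onto the discrete fields. Hence the residual of one
control paired with another one, `c τ`, is `γ ⟨·, ·⟩_Γ + (y' - y_d, y)_{T_h} - (f, z)_{T_h}`. In the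
difference of residuals paired with the difference of the controls the `f`-terms cancel and the two
squares remain. Functions in `U_h` are fixed by `Π_{k-1}^∂`, so the discrete optimal control and
`u` are governed by the same equations.
-/

noncomputable section

namespace HDGControl

/-! ### Integrability and null sets -/

section Measure

variable {α : Type*} [MeasurableSpace α] {μ : Measure α}

theorem integrable_inner_of_memLp {E : Type*} [NormedAddCommGroup E] [InnerProductSpace ℝ E]
    {a b : α → E} (ha : MemLp a 2 μ) (hb : MemLp b 2 μ) :
    Integrable (fun x => inner ℝ (a x) (b x)) μ := by
  refine (L2.integrable_inner (𝕜 := ℝ) (ha.toLp a) (hb.toLp b)).congr ?_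
  filter_upwards [ha.coeFn_toLp, hb.coeFn_toLp] with x hax hbx
  rw [hax, hbx]

theorem integral_inner_smul_const {ι : Type*} [Fintype ι] {c : α → ℝ}
    {a : α → EuclideanSpace ℝ ι} (hc : MemLp c 2 μ) (ha : MemLp a 2 μ) (t : EuclideanSpace ℝ ι) :
    ∫ x, inner ℝ (a x) (c x • t) ∂μ = ∑ i, t i * ∫ x, a x i * c x ∂μ := by
  have hpt (x : α) : inner ℝ (a x) (c x • t) = ∑ i, t i * (a x i * c x) := by
    simp only [PiLp.inner_apply, PiLp.smul_apply, smul_eq_mul, RCLike.inner_apply, conj_trivial]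
    exact Finset.sum_congr rfl fun i _ => by ring
  have hint (i : ι) : Integrable (fun x => a x i * c x) μ := (ha.eval_piLp i).integrable_mul hc
  simp_rw [hpt]
  rw [integral_finsetSum _ fun i _ => (hint i).const_mul (t i)]
  simp_rw [integral_const_mul]

theorem memLp_restrict_of_continuous {E : Type*} [NormedAddCommGroup E] [TopologicalSpace α]
    [T2Space α] [OpensMeasurableSpace α] [SecondCountableTopologyEither α E] {f : α → E}
    (hf : Continuous f) {K : Set α} (hK : IsCompact K) (hμK : μ K ≠ ⊤) (p : ENNReal) :
    MemLp f p (μ.restrict K) := by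
  have : Fact (μ K < ⊤) := ⟨hμK.lt_top⟩
  obtain ⟨C, hC⟩ := hK.exists_bound_of_continuousOn hf.continuousOn
  exact MemLp.of_bound hf.aestronglyMeasurable C (ae_restrict_of_forall_mem hK.measurableSet hC)

theorem addHaar_collinear {E : Type*} [NormedAddCommGroup E] [NormedSpace ℝ E]
    [MeasurableSpace E] [BorelSpace E] [FiniteDimensional ℝ E] (μ : Measure E)
    [μ.IsAddHaarMeasure] (hE : 1 < Module.finrank ℝ E) {s : Set E} (hs : Collinear ℝ s) :
    μ s = 0 := by
  refine measure_mono_null (subset_affineSpan ℝ s) (Measure.addHaar_affineSubspace μ _ ?_)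
  intro hspan
  have hdir : Module.finrank ℝ (vectorSpan ℝ s) = Module.finrank ℝ E := by
    rw [← direction_affineSpan, hspan, AffineSubspace.direction_top, finrank_top]
  exact (hdir ▸ hs.finrank_le_one).not_gt hE

end Measure

theorem volume_segment (a b : Pt) : volume (segment ℝ a b) = 0 := by
  refine addHaar_collinear volume (by simp) ?_
  rw [Collinear, ← direction_affineSpan, ← convexHull_pair, affineSpan_convexHull,
    direction_affineSpan]
  exact collinear_pair ℝ a b

namespace IsPolygonalDomain

variable {Ω : Set Pt}

theorem volume_frontier (hΩ : IsPolygonalDomain Ω) : volume (frontier Ω) = 0 := by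
  obtain ⟨S, hS⟩ := hΩ.polygonal
  rw [hS]
  exact (measure_biUnion_null_iff S.countable_toSet).2 fun s _ => volume_segment s.1 s.2

theorem restrict_closure (hΩ : IsPolygonalDomain Ω) :
    (volume : Measure Pt).restrict (closure Ω) = volume.restrict Ω := by
  refine Measure.restrict_congr_set ?_
  rw [closure_eq_self_union_frontier]
  exact union_ae_eq_left_of_ae_eq_empty (ae_eq_empty.2 hΩ.volume_frontier)

end IsPolygonalDomain

/-! ### Polynomial fields -/

theorem evalAt_neg (p : Poly) (x : Pt) : evalAt (-p) x = -evalAt p x :=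
  map_neg (MvPolynomial.eval _) p

theorem evalAt_sub (p q : Poly) (x : Pt) : evalAt (p - q) x = evalAt p x - evalAt q x :=
  map_sub (MvPolynomial.eval _) p q

theorem vecAt_neg (v : Fin 2 → Poly) (x : Pt) : vecAt (-v) x = -vecAt v x := by
  ext i
  exact evalAt_neg (v i) x

theorem vecAt_sub (v w : Fin 2 → Poly) (x : Pt) : vecAt (v - w) x = vecAt v x - vecAt w x := by
  ext i
  exact evalAt_sub (v i) (w i) x

theorem mulNormalAt_eq_vecAt (G : Fin 2 → Fin 2 → Poly) (n : Pt) :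
    mulNormalAt G n = vecAt fun i => ∑ j, n j • G i j := by
  ext x i
  simp [mulNormalAt, vecAt, evalAt, mul_comm]

theorem mulNormalAt_neg (G : Fin 2 → Fin 2 → Poly) (n x : Pt) :
    mulNormalAt (-G) n x = -mulNormalAt G n x := by
  rw [mulNormalAt_eq_vecAt, mulNormalAt_eq_vecAt, ← vecAt_neg]
  congr 1
  ext1 i
  simp only [Pi.neg_apply, smul_neg, Finset.sum_neg_distrib]

theorem divTen_neg (G : BrokenTen) : divTen (-G) = -divTen G := by
  ext1 T
  ext1 i
  simp only [divTen, Pi.neg_apply, map_neg, Finset.sum_neg_distrib]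

theorem continuous_vecAt (v : Fin 2 → Poly) : Continuous (vecAt v) :=
  (PiLp.continuous_toLp 2 _).comp (continuous_pi fun i => continuous_evalAt (v i))

theorem memLp_vecAt_hull (T : Finset Pt) (v : Fin 2 → Poly) :
    MemLp (vecAt v) 2 (volume.restrict (hull T)) :=
  have hT : IsCompact (hull T) := T.finite_toSet.isCompact_convexHull (𝕜 := ℝ)
  memLp_restrict_of_continuous (continuous_vecAt v) hT hT.measure_ne_top 2

theorem memLp_vecAt_edgeMeasure {e : Finset Pt} (he : e.card = 2) (v : Fin 2 → Poly) :
    MemLp (vecAt v) 2 (edgeMeasure e) :=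
  MemLp.of_eval_piLp fun i => memLp_evalAt e he (v i)

/-! ### The edge projection -/

section EdgeProj

variable {m : ℕ} {e : Finset Pt} {g h : Pt → ℝ} {p q : Poly}

theorem isEdgeProj_of_ae_eq (hp : p.totalDegree ≤ m) (hgp : g =ᵐ[edgeMeasure e] evalAt p) :
    IsEdgeProj m e g p :=
  ⟨hp, fun _ _ => integral_congr_ae (hgp.symm.mul .rfl)⟩

theorem IsEdgeProj.evalAt_ae_eq (he : e.card = 2) (hp : IsEdgeProj m e g p)
    (hq : IsEdgeProj m e g q) : evalAt p =ᵐ[edgeMeasure e] evalAt q := by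
  have hdeg : (p - q).totalDegree ≤ m :=
    (MvPolynomial.totalDegree_sub p q).trans (max_le hp.1 hq.1)
  have hint (r : Poly) :
      Integrable (fun x => evalAt r x * evalAt (p - q) x) (edgeMeasure e) :=
    (memLp_evalAt e he r).integrable_mul (memLp_evalAt e he (p - q))
  have hsq : ∫ x, evalAt (p - q) x * evalAt (p - q) x ∂edgeMeasure e = 0 := by
    simp_rw [evalAt_sub p q, sub_mul, ← evalAt_sub p q]
    rw [integral_sub (hint p) (hint q), hp.2 _ hdeg, hq.2 _ hdeg, sub_self]
  filter_upwards [(integral_eq_zero_iff_of_nonneg (fun _ => mul_self_nonneg _)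
    (hint (p - q))).1 hsq] with x hx
  exact sub_eq_zero.1 (evalAt_sub p q x ▸ mul_self_eq_zero.1 hx)

theorem isEdgeProj_epsilon (he : e.card = 2) (hg : MemLp g 2 (edgeMeasure e)) :
    IsEdgeProj m e g (Classical.epsilon (IsEdgeProj m e g)) :=
  Classical.epsilon_spec (exists_isEdgeProj m e he g hg)

theorem memLp_edgeProj (he : e.card = 2) (m : ℕ) (g : Pt → ℝ) :
    MemLp (edgeProj m e g) 2 (edgeMeasure e) :=
  memLp_evalAt e he _

theorem memLp_edgeProjVec (he : e.card = 2) (m : ℕ) (a : Pt → Pt) :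
    MemLp (edgeProjVec m e a) 2 (edgeMeasure e) :=
  MemLp.of_eval_piLp fun i => memLp_edgeProj he m (a · i)

theorem edgeProj_ae_eq_self (he : e.card = 2) (hp : p.totalDegree ≤ m)
    (hgp : g =ᵐ[edgeMeasure e] evalAt p) : edgeProj m e g =ᵐ[edgeMeasure e] g := by
  have hproj := isEdgeProj_of_ae_eq hp hgp
  exact (IsEdgeProj.evalAt_ae_eq he (Classical.epsilon_spec ⟨p, hproj⟩) hproj).trans hgp.symm

theorem edgeProjVec_vecAt_ae_eq (he : e.card = 2) {v : Fin 2 → Poly}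
    (hv : ∀ i, (v i).totalDegree ≤ m) :
    edgeProjVec m e (vecAt v) =ᵐ[edgeMeasure e] vecAt v := by
  filter_upwards [ae_all_iff.2 fun i => edgeProj_ae_eq_self he (hv i) .rfl] with x hx
  ext i
  exact hx i

theorem integral_edgeProj_mul_comm (he : e.card = 2) (hg : MemLp g 2 (edgeMeasure e))
    (hh : MemLp h 2 (edgeMeasure e)) :
    ∫ x, edgeProj m e g x * h x ∂edgeMeasure e = ∫ x, edgeProj m e h x * g x ∂edgeMeasure e := by
  have hg' := isEdgeProj_epsilon (m := m) he hg
  have hh' := isEdgeProj_epsilon (m := m) he hh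
  calc ∫ x, edgeProj m e g x * h x ∂edgeMeasure e
      = ∫ x, edgeProj m e h x * edgeProj m e g x ∂edgeMeasure e := by
        simp_rw [mul_comm _ (h _)]
        exact (hh'.2 _ hg'.1).symm
    _ = ∫ x, edgeProj m e g x * edgeProj m e h x ∂edgeMeasure e := by simp_rw [mul_comm]
    _ = ∫ x, edgeProj m e h x * g x ∂edgeMeasure e := by
        simp_rw [mul_comm _ (g _)]
        exact hg'.2 _ hh'.1

theorem integral_inner_edgeProjVec_smul_const (he : e.card = 2) {c : Pt → ℝ} {a : Pt → Pt}
    (hc : MemLp c 2 (edgeMeasure e)) (ha : MemLp a 2 (edgeMeasure e)) (t : Pt) :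
    ∫ x, inner ℝ (edgeProjVec m e a x) (c x • t) ∂edgeMeasure e
      = ∫ x, inner ℝ (edgeProj m e c x • t) (a x) ∂edgeMeasure e := by
  simp_rw [real_inner_comm (a _)]
  rw [integral_inner_smul_const hc (memLp_edgeProjVec he m a),
    integral_inner_smul_const (memLp_edgeProj he m c) ha]
  refine Finset.sum_congr rfl fun i _ => ?_
  rw [show ∫ x, edgeProjVec m e a x i * c x ∂edgeMeasure e = _ from
    integral_edgeProj_mul_comm he (ha.eval_piLp i) hc]
  simp_rw [mul_comm (edgeProj m e c _)]

end EdgeProj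

namespace Triangulation

variable {Ω : Set Pt} (M : Triangulation Ω)

/-! ### Mesh geometry -/

theorem mem_triangles {T : Finset Pt} : T ∈ M.triangles ↔ T ∈ M.K.faces ∧ T.card = 3 := by
  simp [triangles]

theorem mem_bdryEdges {e : Finset Pt} :
    e ∈ M.bdryEdges ↔ (e ∈ M.K.faces ∧ e.card = 2) ∧ hull e ⊆ frontier Ω := by
  simp [bdryEdges, edges]

theorem hull_subset_closure {T : Finset Pt} (hT : T ∈ M.triangles) : hull T ⊆ closure Ω := by
  rw [← M.space_eq]
  exact M.K.convexHull_subset_space (M.mem_triangles.1 hT).1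

section BdryEdge

variable {M} {e : Finset Pt}

theorem card_of_mem_bdryEdges (he : e ∈ M.bdryEdges) : e.card = 2 :=
  (M.mem_bdryEdges.1 he).1.2

theorem bdryTriangle_spec (he : e ∈ M.bdryEdges) :
    M.bdryTriangle e ∈ M.triangles ∧ e ⊆ M.bdryTriangle e := by
  obtain ⟨t, ht, het, ht3⟩ := M.pure e (M.mem_bdryEdges.1 he).1.1
  exact Classical.epsilon_spec (p := fun T => T ∈ M.triangles ∧ e ⊆ T)
    ⟨t, M.mem_triangles.2 ⟨ht, ht3⟩, het⟩

theorem isOutwardNormal_bdryNormal (he : e ∈ M.bdryEdges) :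
    IsOutwardNormal (M.bdryTriangle e) e (M.bdryNormal e) := by
  obtain ⟨hT, heT⟩ := bdryTriangle_spec he
  obtain ⟨hT, hT3⟩ := M.mem_triangles.1 hT
  exact Classical.epsilon_spec
    (exists_isOutwardNormal _ e (M.K.indep hT) hT3 heT (card_of_mem_bdryEdges he))

theorem norm_tau (he : e ∈ M.bdryEdges) : ‖M.tau e‖ = 1 := by
  rw [← (isOutwardNormal_bdryNormal he).1, EuclideanSpace.norm_eq, EuclideanSpace.norm_eq]
  simp [tau, Fin.sum_univ_two, add_comm]

end BdryEdge

/-! ### The pairing on the triangles -/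

theorem ipVec_comm (v w : BrokenVec) : M.ipVec v w = M.ipVec w v := by
  simp only [ipVec, real_inner_comm]

theorem ipVec_neg_right (v w : BrokenVec) : M.ipVec v (-w) = -M.ipVec v w := by
  simp only [ipVec, Pi.neg_apply, vecAt_neg, inner_neg_right, integral_neg,
    Finset.sum_neg_distrib]

theorem ipVec_sub_right (v w₁ w₂ : BrokenVec) :
    M.ipVec v (w₁ - w₂) = M.ipVec v w₁ - M.ipVec v w₂ := by
  have hint (T : Finset Pt) (w : BrokenVec) :
      IntegrableOn (fun x => inner ℝ (vecAt (v T) x) (vecAt (w T) x)) (hull T) :=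
    integrable_inner_of_memLp (memLp_vecAt_hull T (v T)) (memLp_vecAt_hull T (w T))
  simp only [ipVec, ← Finset.sum_sub_distrib]
  refine Finset.sum_congr rfl fun T _ => ?_
  rw [← integral_sub (hint T w₁) (hint T w₂)]
  simp only [Pi.sub_apply, vecAt_sub, inner_sub_right]

theorem normVec_sq (v : BrokenVec) : M.normVec v ^ 2 = M.ipVec v v := by
  rw [normVec, Real.sq_sqrt (Finset.sum_nonneg fun _ _ => integral_nonneg fun _ => sq_nonneg _)]
  simp only [ipVec, real_inner_self_eq_norm_sq]

theorem loadDiff_sub_loadDiff (hΩ : IsPolygonalDomain Ω) {yd : Pt → Pt}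
    (hyd : MemLp yd 2 (volume.restrict Ω)) (v₁ v₂ w : BrokenVec) :
    M.loadDiff v₁ yd w - M.loadDiff v₂ yd w = M.ipVec (v₁ - v₂) w := by
  simp only [loadDiff, ipVec, ← Finset.sum_sub_distrib]
  refine Finset.sum_congr rfl fun T hT => ?_
  have hydT : MemLp yd 2 (volume.restrict (hull T)) := by
    rw [← hΩ.restrict_closure] at hyd
    exact hyd.mono_measure (Measure.restrict_mono (M.hull_subset_closure hT) le_rfl)
  have hint (v : BrokenVec) :
      IntegrableOn (fun x => inner ℝ (vecAt (v T) x - yd x) (vecAt (w T) x)) (hull T) :=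
    integrable_inner_of_memLp ((memLp_vecAt_hull T (v T)).sub hydT) (memLp_vecAt_hull T (w T))
  rw [← integral_sub (hint v₁) (hint v₂)]
  simp only [← inner_sub_left, sub_sub_sub_cancel_right, Pi.sub_apply, vecAt_sub]

theorem normVec_sub_sq (hΩ : IsPolygonalDomain Ω) {yd : Pt → Pt}
    (hyd : MemLp yd 2 (volume.restrict Ω)) (v w : BrokenVec) :
    M.normVec (v - w) ^ 2 = (M.loadDiff v yd v - M.loadDiff w yd v)
      - (M.loadDiff v yd w - M.loadDiff w yd w) := by
  rw [normVec_sq, ipVec_sub_right, M.loadDiff_sub_loadDiff hΩ hyd,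
    M.loadDiff_sub_loadDiff hΩ hyd]

/-! ### Square integrable fields on the boundary -/

/-- The space `L²(E_h^∂)` of scalar controls. -/
def CtrlL2 : Set (Pt → ℝ) := {c | ∀ e ∈ M.bdryEdges, MemLp c 2 (edgeMeasure e)}

/-- The space `L²(E_h^∂)²` of vector fields on the boundary edges, on which `⟨·, ·⟩_Γ` is
bilinear. A field may take two values at a common vertex of two edges. -/
def bdryL2 : Submodule ℝ (Finset Pt → Pt → Pt) where
  carrier := {a | ∀ e ∈ M.bdryEdges, MemLp (a e) 2 (edgeMeasure e)}
  zero_mem' _ _ := MemLp.zero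
  add_mem' ha hb e he := (ha e he).add (hb e he)
  smul_mem' r _ ha e he := (ha e he).const_smul r

section BdryL2

variable {M} {k : ℕ} {c : Pt → ℝ} {a a' b b' : Finset Pt → Pt → Pt}

theorem mem_CtrlL2_of_memLp_frontier
    (hc : MemLp c 2 ((Measure.hausdorffMeasure 1).restrict (frontier Ω))) : c ∈ M.CtrlL2 :=
  fun _ he => hc.mono_measure (Measure.restrict_mono (M.mem_bdryEdges.1 he).2 le_rfl)

theorem mem_CtrlL2_of_mem_Ctrl (hc : c ∈ M.Ctrl k) : c ∈ M.CtrlL2 := fun e he => by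
  obtain ⟨p, -, hp⟩ := hc e he
  exact (memLp_congr_ae hp).2 (memLp_evalAt e (card_of_mem_bdryEdges he) p)

theorem tang_mem_bdryL2 (hc : c ∈ M.CtrlL2) : M.tang c ∈ M.bdryL2 := fun e he =>
  (ContinuousLinearMap.toSpanSingleton ℝ (M.tau e)).comp_memLp' (hc e he)

theorem bdryFlux_eq_vecAt (G : BrokenTen) (e : Finset Pt) :
    M.bdryFlux G e = vecAt fun i => ∑ j, M.bdryNormal e j • G (M.bdryTriangle e) i j :=
  mulNormalAt_eq_vecAt _ _

theorem bdryFlux_mem_bdryL2 (G : BrokenTen) : M.bdryFlux G ∈ M.bdryL2 := fun e he => by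
  rw [bdryFlux_eq_vecAt]
  exact memLp_vecAt_edgeMeasure (card_of_mem_bdryEdges he) _

theorem bdryTrace_mem_bdryL2 (v : BrokenVec) : M.bdryTrace v ∈ M.bdryL2 := fun _ he =>
  memLp_vecAt_edgeMeasure (card_of_mem_bdryEdges he) _

theorem bdryProj_mem_bdryL2 (m : ℕ) (a : Finset Pt → Pt → Pt) : bdryProj m a ∈ M.bdryL2 :=
  fun e he => memLp_edgeProjVec (card_of_mem_bdryEdges he) m (a e)

theorem etaMul_mem_bdryL2 (ha : a ∈ M.bdryL2) : M.etaMul a ∈ M.bdryL2 := fun e he =>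
  (ha e he).const_smul (M.bdryEta e)

theorem ipBdry_congr_left (h : ∀ e ∈ M.bdryEdges, a e =ᵐ[edgeMeasure e] a' e) :
    M.ipBdry a b = M.ipBdry a' b :=
  Finset.sum_congr rfl fun e he =>
    integral_congr_ae ((h e he).mono fun x hx => by simp only [hx])

theorem ipBdry_comm (a b : Finset Pt → Pt → Pt) : M.ipBdry a b = M.ipBdry b a := by
  simp only [ipBdry, real_inner_comm]

theorem ipBdry_smul_left (r : ℝ) (a b : Finset Pt → Pt → Pt) :
    M.ipBdry (r • a) b = r * M.ipBdry a b := by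
  simp only [ipBdry, Pi.smul_apply, real_inner_smul_left, integral_const_mul, Finset.mul_sum]

theorem ipBdry_neg_right (a b : Finset Pt → Pt → Pt) : M.ipBdry a (-b) = -M.ipBdry a b := by
  simp only [ipBdry, Pi.neg_apply, inner_neg_right, integral_neg, Finset.sum_neg_distrib]

theorem ipBdry_add_left (ha : a ∈ M.bdryL2) (ha' : a' ∈ M.bdryL2) (hb : b ∈ M.bdryL2) :
    M.ipBdry (a + a') b = M.ipBdry a b + M.ipBdry a' b := by
  simp only [ipBdry, ← Finset.sum_add_distrib]
  refine Finset.sum_congr rfl fun e he => ?_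
  rw [← integral_add (integrable_inner_of_memLp (ha e he) (hb e he))
    (integrable_inner_of_memLp (ha' e he) (hb e he))]
  simp only [Pi.add_apply, inner_add_left]

theorem ipBdry_sub_left (ha : a ∈ M.bdryL2) (ha' : a' ∈ M.bdryL2) (hb : b ∈ M.bdryL2) :
    M.ipBdry (a - a') b = M.ipBdry a b - M.ipBdry a' b := by
  rw [sub_eq_add_neg, ipBdry_add_left ha (neg_mem ha') hb, ipBdry_comm (-a'), ipBdry_neg_right,
    ipBdry_comm b, sub_eq_add_neg]

theorem ipBdry_sub_right (ha : a ∈ M.bdryL2) (hb : b ∈ M.bdryL2) (hb' : b' ∈ M.bdryL2) :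
    M.ipBdry a (b - b') = M.ipBdry a b - M.ipBdry a b' := by
  rw [ipBdry_comm, ipBdry_sub_left hb hb' ha, ipBdry_comm b, ipBdry_comm b']

theorem tang_sub (c₁ c₂ : Pt → ℝ) : M.tang (c₁ - c₂) = M.tang c₁ - M.tang c₂ := by
  ext1 e
  ext1 x
  exact sub_smul (c₁ x) (c₂ x) (M.tau e)

theorem normBdry_sq (c : Pt → ℝ) : M.normBdry c ^ 2 = M.ipBdry (M.tang c) (M.tang c) := by
  rw [normBdry, Real.sq_sqrt (Finset.sum_nonneg fun _ _ => integral_nonneg fun _ => sq_nonneg _)]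
  refine Finset.sum_congr rfl fun e he => ?_
  simp only [tang, real_inner_self_eq_norm_sq, norm_smul, norm_tau he, mul_one]

/-! ### Edge projections on the boundary -/

theorem tang_ae_eq_tangProj (hc : c ∈ M.Ctrl k) {e : Finset Pt} (he : e ∈ M.bdryEdges) :
    M.tang c e =ᵐ[edgeMeasure e] M.tangProj (k - 1) c e := by
  obtain ⟨p, hp, hcp⟩ := hc e he
  filter_upwards [edgeProj_ae_eq_self (card_of_mem_bdryEdges he) hp hcp] with x hx
  simp only [tang, tangProj, hx]

theorem bdryFlux_ae_eq_bdryProj {G : BrokenTen} (hG : G ∈ M.Sig k) {e : Finset Pt}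
    (he : e ∈ M.bdryEdges) :
    M.bdryFlux G e =ᵐ[edgeMeasure e] bdryProj (k - 1) (M.bdryFlux G) e := by
  have hdeg (i : Fin 2) :
      (∑ j, M.bdryNormal e j • G (M.bdryTriangle e) i j).totalDegree ≤ k - 1 :=
    MvPolynomial.totalDegree_finsetSum_le fun j _ =>
      (MvPolynomial.totalDegree_smul_le _ _).trans (hG _ (bdryTriangle_spec he).1 i j)
  change M.bdryFlux G e =ᵐ[edgeMeasure e] edgeProjVec (k - 1) e (M.bdryFlux G e)
  rw [bdryFlux_eq_vecAt]
  exact (edgeProjVec_vecAt_ae_eq (card_of_mem_bdryEdges he) hdeg).symm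

theorem ipBdry_bdryProj_tang (m : ℕ) (ha : a ∈ M.bdryL2) (hc : c ∈ M.CtrlL2) :
    M.ipBdry (bdryProj m a) (M.tang c) = M.ipBdry (M.tangProj m c) a :=
  Finset.sum_congr rfl fun e he =>
    integral_inner_edgeProjVec_smul_const (card_of_mem_bdryEdges he) (hc e he) (ha e he) (M.tau e)

theorem ipBdry_etaMul_bdryProj_tang (m : ℕ) (ha : a ∈ M.bdryL2) (hc : c ∈ M.CtrlL2) :
    M.ipBdry (M.etaMul (bdryProj m a)) (M.tang c) = M.ipBdry (M.etaMul (M.tangProj m c)) a := by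
  refine Finset.sum_congr rfl fun e he => ?_
  simp only [etaMul, real_inner_smul_left, integral_const_mul]
  congr 1
  exact integral_inner_edgeProjVec_smul_const (card_of_mem_bdryEdges he) (hc e he) (ha e he)
    (M.tau e)

theorem ipBdry_bdryFlux_tang {G : BrokenTen} (hG : G ∈ M.Sig k) (hc : c ∈ M.CtrlL2) :
    M.ipBdry (M.bdryFlux G) (M.tang c) = M.ipBdry (M.tangProj (k - 1) c) (M.bdryFlux G) := by
  rw [ipBdry_congr_left fun e he => bdryFlux_ae_eq_bdryProj hG he,
    ipBdry_bdryProj_tang (k - 1) (bdryFlux_mem_bdryL2 G) hc]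

theorem residual_mem_bdryL2 (m : ℕ) (γ : ℝ) (hc : c ∈ M.CtrlL2) (T : BrokenTen) (z : BrokenVec) :
    M.residual m γ c T z ∈ M.bdryL2 :=
  add_mem (sub_mem (M.bdryL2.smul_mem γ (tang_mem_bdryL2 hc)) (bdryFlux_mem_bdryL2 T))
    (etaMul_mem_bdryL2 (bdryProj_mem_bdryL2 m _))

theorem ipBdry_residual (m : ℕ) (γ : ℝ) (hc : c ∈ M.CtrlL2) (T : BrokenTen) (z : BrokenVec)
    (hb : b ∈ M.bdryL2) :
    M.ipBdry (M.residual m γ c T z) b = γ * M.ipBdry (M.tang c) b - M.ipBdry (M.bdryFlux T) b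
      + M.ipBdry (M.etaMul (bdryProj m (M.bdryTrace z))) b := by
  have hγc := M.bdryL2.smul_mem γ (tang_mem_bdryL2 hc)
  have hT := bdryFlux_mem_bdryL2 (M := M) T
  rw [residual, ipBdry_add_left (sub_mem hγc hT) (etaMul_mem_bdryL2 (bdryProj_mem_bdryL2 m _)) hb,
    ipBdry_sub_left hγc hT hb, ipBdry_smul_left]

end BdryL2

/-! ### Symmetry of the bilinear form -/

theorem ipScal_comm (p q : BrokenScal) : M.ipScal p q = M.ipScal q p := by
  simp only [ipScal, mul_comm]

theorem ipTen_comm (G H : BrokenTen) : M.ipTen G H = M.ipTen H G := by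
  simp only [ipTen, mul_comm]

theorem ipSkel_comm (a b : Finset Pt → Finset Pt → Pt → Pt) : M.ipSkel a b = M.ipSkel b a := by
  simp only [ipSkel, real_inner_comm]

theorem ipSkel_eta_comm (a b : Finset Pt → Finset Pt → Pt → Pt) :
    M.ipSkel (fun T e x => eta T • a T e x) b = M.ipSkel (fun T e x => eta T • b T e x) a := by
  simp only [ipSkel, real_inner_smul_left]
  simp only [real_inner_comm]

theorem ipScal_neg_right (p q : BrokenScal) : M.ipScal p (-q) = -M.ipScal p q := by
  simp only [ipScal, Pi.neg_apply, evalAt_neg, mul_neg, integral_neg, Finset.sum_neg_distrib]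

theorem ipTen_neg_right (G H : BrokenTen) : M.ipTen G (-H) = -M.ipTen G H := by
  simp only [ipTen, Pi.neg_apply, evalAt_neg, mul_neg, integral_neg, Finset.sum_neg_distrib]

theorem ipSkel_neg_right (a b : Finset Pt → Finset Pt → Pt → Pt) :
    M.ipSkel a (-b) = -M.ipSkel a b := by
  simp only [ipSkel, Pi.neg_apply, inner_neg_right, integral_neg, Finset.sum_neg_distrib]

theorem skelNormal_neg (G : BrokenTen) : skelNormal (-G) = -skelNormal G := by
  ext1 T
  ext1 e
  ext1 x
  exact mulNormalAt_neg (G T) (normal T e) x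

theorem bdryFlux_neg (G : BrokenTen) : M.bdryFlux (-G) = -M.bdryFlux G := by
  ext1 e
  ext1 x
  exact mulNormalAt_neg (G (M.bdryTriangle e)) (M.bdryNormal e) x

theorem B_neg_neg_comm (k : ℕ) (L : BrokenTen) (y : BrokenVec) (yhat : Pt → Pt) (p : BrokenScal)
    (T : BrokenTen) (z : BrokenVec) (zhat : Pt → Pt) (w : BrokenScal) :
    M.B k L y yhat p (-T) z zhat (-w) = M.B k T z zhat w (-L) y yhat (-p) := by
  simp only [B, ipTen_neg_right, ipScal_neg_right, divTen_neg, ipVec_neg_right, skelNormal_neg,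
    ipSkel_neg_right]
  rw [M.ipTen_comm T L, M.ipVec_comm z, M.ipVec_comm (divTen T), M.ipScal_comm w,
    M.ipScal_comm (divVec z), M.ipSkel_comm (fun _ _ x => zhat x),
    M.ipSkel_comm (skelNormal T), M.ipSkel_eta_comm (skelJump (k - 1) z zhat)]
  ring

theorem neg_mem_Sig {k : ℕ} {G : BrokenTen} (hG : G ∈ M.Sig k) : -G ∈ M.Sig k :=
  fun T hT i j => (MvPolynomial.totalDegree_neg (G T i j)).trans_le (hG T hT i j)

theorem neg_mem_Pres {k : ℕ} {q : BrokenScal} (hq : q ∈ M.Pres k) : -q ∈ M.Pres k := by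
  refine ⟨fun T hT => (MvPolynomial.totalDegree_neg (q T)).trans_le (hq.1 T hT), ?_⟩
  simp only [Pi.neg_apply, evalAt_neg, integral_neg, Finset.sum_neg_distrib, hq.2, neg_zero]

/-! ### State and adjoint equations -/

namespace IsState

variable {M} {k : ℕ} {f yd : Pt → Pt} {g g' : Finset Pt → Pt → Pt} {L T : BrokenTen}
  {y y' z : BrokenVec} {yhat zhat : Pt → Pt} {p w : BrokenScal}

theorem congr_bdry (hs : M.IsState k f g L y yhat p)
    (hg : ∀ e ∈ M.bdryEdges, g e =ᵐ[edgeMeasure e] g' e) : M.IsState k f g' L y yhat p where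
  memL := hs.memL
  memY := hs.memY
  memYhat := hs.memYhat
  memP := hs.memP
  eqn G hG v hv vhat hvhat q hq := by
    have hη : ∀ e ∈ M.bdryEdges, M.etaMul g e =ᵐ[edgeMeasure e] M.etaMul g' e :=
      fun e he => (hg e he).const_smul (M.bdryEta e)
    rw [hs.eqn G hG v hv vhat hvhat q hq, ipBdry_congr_left hg, ipBdry_congr_left hη]

theorem tangProj_of_mem_Ctrl {c : Pt → ℝ} (hs : M.IsState k f (M.tang c) L y yhat p)
    (hc : c ∈ M.Ctrl k) : M.IsState k f (M.tangProj (k - 1) c) L y yhat p :=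
  hs.congr_bdry fun _ he => tang_ae_eq_tangProj hc he

theorem loadDiff_eq (hs : M.IsState k f g L y yhat p) (ha : M.IsAdjoint k y' yd T z zhat w) :
    M.loadDiff y' yd y
      = M.load f z - M.ipBdry g (M.bdryFlux T) + M.ipBdry (M.etaMul g) (M.bdryTrace z) := by
  rw [← ha.eqn _ (M.neg_mem_Sig hs.memL) y hs.memY yhat hs.memYhat _ (M.neg_mem_Pres hs.memP),
    ← M.B_neg_neg_comm,
    hs.eqn _ (M.neg_mem_Sig ha.memT) z ha.memZ zhat ha.memZhat _ (M.neg_mem_Pres ha.memW),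
    bdryFlux_neg, ipBdry_neg_right, sub_eq_add_neg]

theorem ipBdry_residual_tang {c c' : Pt → ℝ} (hc : c ∈ M.CtrlL2) (hc' : c' ∈ M.CtrlL2)
    (hs : M.IsState k f (M.tangProj (k - 1) c) L y yhat p)
    (ha : M.IsAdjoint k y' yd T z zhat w) (γ : ℝ) :
    M.ipBdry (M.residual (k - 1) γ c' T z) (M.tang c)
      = γ * M.ipBdry (M.tang c') (M.tang c) + M.loadDiff y' yd y - M.load f z := by
  rw [ipBdry_residual (k - 1) γ hc' T z (tang_mem_bdryL2 hc), ipBdry_bdryFlux_tang ha.memT hc,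
    ipBdry_etaMul_bdryProj_tang (k - 1) (bdryTrace_mem_bdryL2 z) hc, hs.loadDiff_eq ha]
  ring

end IsState

end Triangulation

end HDGControl

end

open HDGControl.Triangulation in
theorem control_error_identity_general {Ω : Set HDGControl.Pt}
    (hΩ : HDGControl.IsPolygonalDomain Ω) (M : HDGControl.Triangulation Ω) {k : ℕ} (γ : ℝ)
    {f yd : HDGControl.Pt → HDGControl.Pt} (hyd : MemLp yd 2 (volume.restrict Ω))
    {c₁ c₂ : HDGControl.Pt → ℝ} (hc₁ : c₁ ∈ M.CtrlL2) (hc₂ : c₂ ∈ M.CtrlL2)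
    {L₁ L₂ T₁ T₂ : HDGControl.BrokenTen} {y₁ y₂ z₁ z₂ : HDGControl.BrokenVec}
    {yhat₁ yhat₂ zhat₁ zhat₂ : HDGControl.Pt → HDGControl.Pt}
    {p₁ p₂ w₁ w₂ : HDGControl.BrokenScal}
    (hstate₁ : M.IsState k f (M.tangProj (k - 1) c₁) L₁ y₁ yhat₁ p₁)
    (hstate₂ : M.IsState k f (M.tangProj (k - 1) c₂) L₂ y₂ yhat₂ p₂)
    (hadj₁ : M.IsAdjoint k y₁ yd T₁ z₁ zhat₁ w₁) (hadj₂ : M.IsAdjoint k y₂ yd T₂ z₂ zhat₂ w₂) :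
    γ * M.normBdry (c₁ - c₂) ^ 2 + M.normVec (y₁ - y₂) ^ 2
      = M.ipBdry (M.residual (k - 1) γ c₁ T₁ z₁) (M.tang (c₁ - c₂))
        - M.ipBdry (M.residual (k - 1) γ c₂ T₂ z₂) (M.tang (c₁ - c₂)) := by
  have hτ₁ := tang_mem_bdryL2 hc₁
  have hτ₂ := tang_mem_bdryL2 hc₂
  rw [normBdry_sq, M.normVec_sub_sq hΩ hyd, tang_sub,
    ipBdry_sub_left hτ₁ hτ₂ (sub_mem hτ₁ hτ₂),
    ipBdry_sub_right hτ₁ hτ₁ hτ₂, ipBdry_sub_right hτ₂ hτ₁ hτ₂,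
    ipBdry_sub_right (residual_mem_bdryL2 _ γ hc₁ T₁ z₁) hτ₁ hτ₂,
    ipBdry_sub_right (residual_mem_bdryL2 _ γ hc₂ T₂ z₂) hτ₁ hτ₂,
    hstate₁.ipBdry_residual_tang hc₁ hc₁ hadj₁, hstate₂.ipBdry_residual_tang hc₂ hc₁ hadj₁,
    hstate₁.ipBdry_residual_tang hc₁ hc₂ hadj₂, hstate₂.ipBdry_residual_tang hc₂ hc₂ hadj₂]
  ring

/-- Error identity for the HDG discretization of the tangential Dirichlet boundary control
problem for the Stokes system. Here `(Lh, …, wh, uh)` solves the discrete optimality system,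
`(Lhu, yhu, yhatu, phu)` and `(Thu, zhu, zhatu, whu)` solve the auxiliary discrete state and adjoint
problems with the control `u ∈ L²(Γ)`, and `ζ_y = yhu - yh`. -/
theorem control_error_identity
    (Ω : Set HDGControl.Pt) (hΩ : HDGControl.IsPolygonalDomain Ω)
    (M : HDGControl.Triangulation Ω) (k : ℕ) (hk : 1 ≤ k) (γ : ℝ) (hγ : 0 < γ)
    (f yd : HDGControl.Pt → HDGControl.Pt)
    (hf : MemLp f 2 (volume.restrict Ω)) (hyd : MemLp yd 2 (volume.restrict Ω))
    (u : HDGControl.Pt → ℝ)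
    (hu : MemLp u 2 ((Measure.hausdorffMeasure 1).restrict (frontier Ω)))
    (Lh : HDGControl.BrokenTen) (yh : HDGControl.BrokenVec)
    (yhath : HDGControl.Pt → HDGControl.Pt) (ph : HDGControl.BrokenScal)
    (Th : HDGControl.BrokenTen) (zh : HDGControl.BrokenVec)
    (zhath : HDGControl.Pt → HDGControl.Pt) (wh : HDGControl.BrokenScal)
    (uh : HDGControl.Pt → ℝ)
    (hopt : M.IsDiscreteOptimal k γ f yd Lh yh yhath ph Th zh zhath wh uh)
    (Lhu : HDGControl.BrokenTen) (yhu : HDGControl.BrokenVec)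
    (yhatu : HDGControl.Pt → HDGControl.Pt) (phu : HDGControl.BrokenScal)
    (hstate : M.IsState k f (M.tangProj (k - 1) u) Lhu yhu yhatu phu)
    (Thu : HDGControl.BrokenTen) (zhu : HDGControl.BrokenVec)
    (zhatu : HDGControl.Pt → HDGControl.Pt) (whu : HDGControl.BrokenScal)
    (hadj : M.IsAdjoint k yhu yd Thu zhu zhatu whu) :
    γ * M.normBdry (u - uh) ^ 2 + M.normVec (yhu - yh) ^ 2
      = M.ipBdry (M.residual (k - 1) γ u Thu zhu) (M.tang (u - uh))
        - M.ipBdry (M.residual (k - 1) γ uh Th zh) (M.tang (u - uh)) := by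
  open HDGControl.Triangulation in
  exact control_error_identity_general hΩ M γ hyd (mem_CtrlL2_of_memLp_frontier hu)
    (mem_CtrlL2_of_mem_Ctrl hopt.memU) hstate (hopt.state.tangProj_of_mem_Ctrl hopt.memU)
    hadj hopt.adjoint
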